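/- (Theorem 1, part 1) For every model M, world w and hybrid formula φ: I have a winning strategy for the semantic game G(M, (P, w : φ)) if and only if M, w ⊨ φ. -/

import Mathlib

/-- Hybrid logic formulas over nominals `ℕ` and propositional variables `ℕ`
(the two sorts are kept disjoint by the constructors). -/
inductive Form : Type where
  | prop : ℕ → Form
  | nom : ℕ → Form
  | rel : ℕ → ℕ → Form
  | and : Form → Form → Form
  | or : Form → Form → Form
  | imp : Form → Form → Form
  | neg : Form → Form
  | at_ : ℕ → Form → Form
  | box : Form → Form
  | dia : Form → Form

/-- A model for hybrid logic: a nonempty set of worlds, an accessibility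
relation, a valuation and an assignment of nominals to worlds. -/
structure Model where
  W : Type
  ne : Nonempty W
  R : W → W → Prop
  V : ℕ → W → Prop
  g : ℕ → W

/-- Satisfaction of a formula at a world of a model. -/
def sat (M : Model) : M.W → Form → Prop
  | w, .prop p => M.V p w
  | w, .nom i => M.g i = w
  | _, .rel i j => M.R (M.g i) (M.g j)
  | w, .and φ ψ => sat M w φ ∧ sat M w ψ
  | w, .or φ ψ => sat M w φ ∨ sat M w ψ
  | w, .imp φ ψ => ¬ sat M w φ ∨ sat M w ψ
  | w, .neg φ => ¬ sat M w φ
  | _, .at_ i φ => sat M (M.g i) φ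
  | w, .box φ => ∀ v, M.R w v → sat M v φ
  | w, .dia φ => ∃ v, M.R w v ∧ sat M v φ

/-- A model is named iff every world has a name, i.e. the assignment is surjective. -/
def Model.Named (M : Model) : Prop := Function.Surjective M.g

/-- A formula is valid iff it is true at every world of every model. -/
def Valid (φ : Form) : Prop := ∀ (M : Model) (w : M.W), sat M w φ

/-- Roles: `pro` means I am the proponent (`P`-state), `opp` that I am the opponent (`O`-state). -/
inductive Role : Type where
  | pro : Role
  | opp : Role

/-- Game states of the semantic game over a model: `loc r w φ` is the state
`Q, w : φ` and `glob r φ` is the state `Q : φ` (with `Q = P` for `r = pro`, `Q = O` for `r = opp`). -/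
inductive GState (M : Model) : Type where
  | loc : Role → M.W → Form → GState M
  | glob : Role → Form → GState M

/-- `IWins M s` holds iff I have a winning strategy for the semantic game `G(M, s)`:
a subtree of the game tree keeping exactly one child of every non-leaf node labelled "I"
(and all children of nodes labelled "Y"), all of whose leaves are labelled "I".
Each constructor corresponds to one game rule: at "I"-nodes I pick one child in which
I have a winning strategy; at "Y"-nodes I must have a winning strategy in every child;
leaves must be labelled "I". -/
inductive IWins (M : Model) : GState M → Prop where
  -- elementary leaves
  | proProp {w p} : M.V p w → IWins M (.loc .pro w (.prop p))
  | oppProp {w p} : ¬ M.V p w → IWins M (.loc .opp w (.prop p))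
  | proNom {w i} : M.g i = w → IWins M (.loc .pro w (.nom i))
  | oppNom {w i} : M.g i ≠ w → IWins M (.loc .opp w (.nom i))
  | proRel {w : M.W} {i j} : M.R (M.g i) (M.g j) → IWins M (.loc .pro w (.rel i j))
  | oppRel {w : M.W} {i j} : ¬ M.R (M.g i) (M.g j) → IWins M (.loc .opp w (.rel i j))
  -- disjunction
  | proOrL {w φ ψ} : IWins M (.loc .pro w φ) → IWins M (.loc .pro w (.or φ ψ))
  | proOrR {w φ ψ} : IWins M (.loc .pro w ψ) → IWins M (.loc .pro w (.or φ ψ))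
  | oppOr {w φ ψ} : IWins M (.loc .opp w φ) → IWins M (.loc .opp w ψ) →
      IWins M (.loc .opp w (.or φ ψ))
  -- conjunction
  | proAnd {w φ ψ} : IWins M (.loc .pro w φ) → IWins M (.loc .pro w ψ) →
      IWins M (.loc .pro w (.and φ ψ))
  | oppAndL {w φ ψ} : IWins M (.loc .opp w φ) → IWins M (.loc .opp w (.and φ ψ))
  | oppAndR {w φ ψ} : IWins M (.loc .opp w ψ) → IWins M (.loc .opp w (.and φ ψ))
  -- implication
  | proImpL {w φ ψ} : IWins M (.loc .opp w φ) → IWins M (.loc .pro w (.imp φ ψ))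
  | proImpR {w φ ψ} : IWins M (.loc .pro w ψ) → IWins M (.loc .pro w (.imp φ ψ))
  | oppImp {w φ ψ} : IWins M (.loc .pro w φ) → IWins M (.loc .opp w ψ) →
      IWins M (.loc .opp w (.imp φ ψ))
  -- negation (role switch)
  | proNeg {w φ} : IWins M (.loc .opp w φ) → IWins M (.loc .pro w (.neg φ))
  | oppNeg {w φ} : IWins M (.loc .pro w φ) → IWins M (.loc .opp w (.neg φ))
  -- @-operator
  | proAt {w i φ} : IWins M (.loc .pro (M.g i) φ) → IWins M (.loc .pro w (.at_ i φ))
  | oppAt {w i φ} : IWins M (.loc .opp (M.g i) φ) → IWins M (.loc .opp w (.at_ i φ))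
  -- box: for `P` a "Y"-node over all successors (a leaf labelled "I" if there are none);
  -- for `O` an "I"-node over all successors (a leaf labelled "Y" if there are none)
  | proBox {w φ} : (∀ v, M.R w v → IWins M (.loc .pro v φ)) → IWins M (.loc .pro w (.box φ))
  | oppBox {w φ} (v) : M.R w v → IWins M (.loc .opp v φ) → IWins M (.loc .opp w (.box φ))
  -- diamond: dual to box
  | proDia {w φ} (v) : M.R w v → IWins M (.loc .pro v φ) → IWins M (.loc .pro w (.dia φ))
  | oppDia {w φ} : (∀ v, M.R w v → IWins M (.loc .opp v φ)) → IWins M (.loc .opp w (.dia φ))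
  -- global states
  | proGlob {φ} : (∀ w, IWins M (.loc .pro w φ)) → IWins M (.glob .pro φ)
  | oppGlob {φ} (w) : IWins M (.loc .opp w φ) → IWins M (.glob .opp φ)

/-- Truth of the claim I make at a state: as proponent I assert the formula, at the given world or
at every world; as opponent I deny this assertion. At a state labelled "I" it is the disjunction of
the truths of the children, at a state labelled "Y" their conjunction. -/
def GState.Holds {M : Model} : GState M → Prop
  | .loc .pro w φ => sat M w φ
  | .loc .opp w φ => ¬ sat M w φ
  | .glob .pro φ => ∀ w, sat M w φ
  | .glob .opp φ => ¬ ∀ w, sat M w φ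

section

variable {M : Model}

theorem IWins.holds : ∀ {s : GState M}, IWins M s → s.Holds
  | _, .proProp h | _, .oppProp h => h
  | _, .proNom h | _, .oppNom h => h
  | _, .proRel h | _, .oppRel h => h
  | _, .proOrL h => Or.inl h.holds
  | _, .proOrR h => Or.inr h.holds
  | _, .oppOr hφ hψ => not_or.2 ⟨hφ.holds, hψ.holds⟩
  | _, .proAnd hφ hψ => ⟨hφ.holds, hψ.holds⟩
  | _, .oppAndL h => fun hand => h.holds hand.1
  | _, .oppAndR h => fun hand => h.holds hand.2
  | _, .proImpL h => Or.inl h.holds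
  | _, .proImpR h => Or.inr h.holds
  | _, .oppImp hφ hψ => not_or.2 ⟨not_not.2 hφ.holds, hψ.holds⟩
  | _, .proNeg h => h.holds
  | _, .oppNeg h => not_not.2 h.holds
  | _, .proAt h | _, .oppAt h => h.holds
  | _, .proBox h => fun v hwv => (h v hwv).holds
  | _, .oppBox v hwv h => fun hbox => h.holds (hbox v hwv)
  | _, .proDia v hwv h => ⟨v, hwv, h.holds⟩
  | _, .oppDia h => fun ⟨v, hwv, hv⟩ => (h v hwv).holds hv
  | _, .proGlob h => fun w => (h w).holds
  | _, .oppGlob w h => fun hall => h.holds (hall w)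

-- Both roles are treated at once because `neg` and `imp` exchange them.
theorem GState.Holds.iWins_loc : ∀ {r : Role} {w : M.W} {φ : Form},
    (GState.loc r w φ).Holds → IWins M (.loc r w φ)
  | .pro, _, .prop _, h => .proProp h
  | .opp, _, .prop _, h => .oppProp h
  | .pro, _, .nom _, h => .proNom h
  | .opp, _, .nom _, h => .oppNom h
  | .pro, _, .rel _ _, h => .proRel h
  | .opp, _, .rel _ _, h => .oppRel h
  | .pro, _, .and _ _, ⟨hφ, hψ⟩ => .proAnd (iWins_loc hφ) (iWins_loc hψ)
  | .opp, _, .and _ _, h =>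
    (not_and_or.1 h).elim (fun hφ => .oppAndL (iWins_loc hφ)) (fun hψ => .oppAndR (iWins_loc hψ))
  | .pro, _, .or _ _, .inl hφ => .proOrL (iWins_loc hφ)
  | .pro, _, .or _ _, .inr hψ => .proOrR (iWins_loc hψ)
  | .opp, _, .or _ _, h =>
    have ⟨hφ, hψ⟩ := not_or.1 h
    .oppOr (iWins_loc hφ) (iWins_loc hψ)
  | .pro, _, .imp _ _, .inl hφ => .proImpL (iWins_loc hφ)
  | .pro, _, .imp _ _, .inr hψ => .proImpR (iWins_loc hψ)
  | .opp, _, .imp _ _, h =>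
    have ⟨hφ, hψ⟩ := not_or.1 h
    .oppImp (iWins_loc (not_not.1 hφ)) (iWins_loc hψ)
  | .pro, _, .neg _, h => .proNeg (iWins_loc h)
  | .opp, _, .neg _, h => .oppNeg (iWins_loc (not_not.1 h))
  | .pro, _, .at_ _ _, h => .proAt (iWins_loc h)
  | .opp, _, .at_ _ _, h => .oppAt (iWins_loc h)
  | .pro, _, .box _, h => .proBox fun v hwv => iWins_loc (h v hwv)
  | .opp, _, .box _, h =>
    have ⟨v, hv⟩ := not_forall.1 h
    have ⟨hwv, hφ⟩ := Classical.not_imp.1 hv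
    .oppBox v hwv (iWins_loc hφ)
  | .pro, _, .dia _, ⟨v, hwv, hφ⟩ => .proDia v hwv (iWins_loc hφ)
  | .opp, _, .dia _, h => .oppDia fun v hwv => iWins_loc fun hφ => h ⟨v, hwv, hφ⟩

theorem GState.Holds.iWins : ∀ {s : GState M}, s.Holds → IWins M s
  | .loc _ _ _, h => h.iWins_loc
  | .glob .pro _, h => .proGlob fun w => iWins_loc (h w)
  | .glob .opp _, h =>
    have ⟨w, hw⟩ := not_forall.1 h
    .oppGlob w (iWins_loc hw)

theorem iWins_pro_iff_sat_general (s : GState M) : IWins M s ↔ s.Holds :=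
  ⟨IWins.holds, GState.Holds.iWins⟩

end

/-- (Theorem 1, part 1) I have a winning strategy for `G(M, (P, w : φ))` iff `M, w ⊨ φ`. -/
theorem iWins_pro_iff_sat (M : Model) (w : M.W) (φ : Form) :
    IWins M (.loc .pro w φ) ↔ sat M w φ :=
  iWins_pro_iff_sat_general (.loc .pro w φ)
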